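/- arXiv:1612.03372 — 2 statements merged into one kernel-verified Lean document; each statement's English description precedes it below -/
import Mathlib

section
/- Let n ≥ 3 and 1 ≤ k < n/2, let L be the Laplacian matrix of the generalized Petersen graph GP(n,k), viewed as a ℤ-linear map ℤ^{2n} → ℤ^{2n}, and let 𝒜 be the (2k+2)×(2k+2) companion matrix of the polynomial Q_k. Then the torsion subgroup of coker L (i.e., the Jacobian group Jac(GP(n,k))) is isomorphic to the torsion subgroup of coker(𝒜^n − I). -/
open Polynomial

def gpRel (n k : ℕ) : (ZMod n ⊕ ZMod n) → (ZMod n ⊕ ZMod n) → Prop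
  | Sum.inl i, Sum.inl j => j = i + 1
  | Sum.inl i, Sum.inr j => j = i
  | Sum.inr _, Sum.inl _ => False
  | Sum.inr i, Sum.inr j => j = i + (k : ZMod n)

instance (n k : ℕ) : DecidableRel (gpRel n k) := fun a b =>
  match a, b with
  | Sum.inl i, Sum.inl j => inferInstanceAs (Decidable (j = i + 1))
  | Sum.inl i, Sum.inr j => inferInstanceAs (Decidable (j = i))
  | Sum.inr _, Sum.inl _ => inferInstanceAs (Decidable False)
  | Sum.inr i, Sum.inr j => inferInstanceAs (Decidable (j = i + (k : ZMod n)))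

/-- The generalized Petersen graph `GP(n,k)`; `Sum.inl i` is the outer vertex `u_i`,
`Sum.inr i` the inner vertex `v_i`, and the edges are `u_i u_{i+1}`, `u_i v_i`,
`v_i v_{i+k}` (indices mod `n`). -/
def genPetersen (n k : ℕ) : SimpleGraph (ZMod n ⊕ ZMod n) :=
  SimpleGraph.fromRel (gpRel n k)

instance (n k : ℕ) : DecidableRel (genPetersen n k).Adj := fun a b =>
  inferInstanceAs (Decidable (a ≠ b ∧ (gpRel n k a b ∨ gpRel n k b a)))

/-- The monic integer polynomial `Q_k(z) = z^{k+1}·((3 − z − z⁻¹)(3 − z^k − z^{−k}) − 1)`,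
written out as
`Q_k(z) = 1 − 3z + z² − 3z^k + 8z^{k+1} − 3z^{k+2} + z^{2k} − 3z^{2k+1} + z^{2k+2}`. -/
noncomputable def gpCharPoly (k : ℕ) : Polynomial ℤ :=
  1 - 3 * X + X ^ 2 - 3 * X ^ k + 8 * X ^ (k + 1) - 3 * X ^ (k + 2)
    + X ^ (2 * k) - 3 * X ^ (2 * k + 1) + X ^ (2 * k + 2)

/-- The `(2k+2) × (2k+2)` companion matrix `𝒜` of `Q_k`: the first `2k+1` rows form
the block `(0 | I_{2k+1})` and the last row is `(−1, −a_1, …, −a_{2k+1})`, where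
`Q_k(z) = 1 + a_1 z + ⋯ + a_{2k+1} z^{2k+1} + z^{2k+2}`. -/
noncomputable def gpCompanion (k : ℕ) : Matrix (Fin (2 * k + 2)) (Fin (2 * k + 2)) ℤ :=
  fun i j =>
    if (i : ℕ) = 2 * k + 1 then -(gpCharPoly k).coeff (j : ℕ)
    else if (j : ℕ) = (i : ℕ) + 1 then 1 else 0

/-!
Let `P` be the cyclic shift of `ℤ^n`. The Laplacian of `GP(n,k)` is the block matrix
`[[A, -1], [-1, D]]` with `A = 3 - P - P⁻¹` and `D = 3 - P^k - P^(-k)`. Eliminating one block of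
coordinates identifies its cokernel with that of `A D - 1`, which is `Q_k(P)` up to the invertible
factor `P^(k+1)`. Now `ℤ^n` with `P` is `ℤ[X] ⧸ (X^n - 1)`, and `ℤ^(2k+2)` with the companion
matrix `𝒜` is `ℤ[X] ⧸ (Q_k)`. Hence `Q_k(P)` and `𝒜^n - 1` have the same cokernel,
`ℤ[X] ⧸ (Q_k, X^n - 1)`.
-/

section CyclicVector

variable {R M N : Type*} [CommRing R] [AddCommGroup M] [Module R M] [AddCommGroup N] [Module R N]

/-- `e` is a cyclic vector for `F` whose annihilator is the ideal generated by `q`; equivalently,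
`p ↦ p(F) e` induces an isomorphism `R[X] ⧸ (q) ≃ M` turning multiplication by `X` into `F`. -/
structure IsCyclicVector (F : Module.End R M) (e : M) (q : R[X]) : Prop where
  surjective : Function.Surjective fun p : R[X] => aeval F p e
  aeval_apply_eq_zero_iff : ∀ p : R[X], aeval F p e = 0 ↔ q ∣ p

theorem eq_zero_of_aeval_apply_eq_zero_of_degree_lt [Nontrivial R] [Module.Free R M]
    [Module.Finite R M] {F : Module.End R M} {e : M} {q : R[X]}
    (hq : IsMonicOfDegree q (Module.finrank R M)) (hqe : aeval F q e = 0)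
    (hsurj : Function.Surjective fun p : R[X] => aeval F p e)
    {p : R[X]} (hdeg : p.degree < q.degree) (hp : aeval F p e = 0) : p = 0 := by
  have hdegree : q.degree = Module.finrank R M := by
    rw [degree_eq_natDegree hq.ne_zero, hq.natDegree_eq]
  let i : degreeLT R (Module.finrank R M) ≃ₗ[R] M :=
    (degreeLTEquiv R _).trans (LinearEquiv.ofFinrankEq _ _ (by simp))
  let f : degreeLT R (Module.finrank R M) →ₗ[R] M :=
    (LinearMap.applyₗ e ∘ₗ (aeval F).toLinearMap) ∘ₗ Submodule.subtype _
  have hf : Function.Surjective f := fun v => by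
    obtain ⟨r, rfl⟩ := hsurj v
    have hr : r %ₘ q ∈ degreeLT R (Module.finrank R M) :=
      mem_degreeLT.mpr (hdegree ▸ degree_modByMonic_lt r hq.monic)
    refine ⟨⟨r %ₘ q, hr⟩, ?_⟩
    change aeval F (r %ₘ q) e = aeval F r e
    rw [modByMonic_eq_sub_mul_div, mul_comm, map_sub, map_mul, LinearMap.sub_apply,
      Module.End.mul_apply, hqe, map_zero, sub_zero]
  have hinj : Function.Injective f :=
    OrzechProperty.injective_of_surjective_of_injective i.toLinearMap f i.injective hf
  have hp_zero : (⟨p, mem_degreeLT.mpr (hdegree ▸ hdeg)⟩ : degreeLT R (Module.finrank R M)) = 0 :=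
    hinj (hp.trans (map_zero f).symm)
  exact congrArg Subtype.val hp_zero

namespace IsCyclicVector

theorem of_surjective [Nontrivial R] [Module.Free R M] [Module.Finite R M]
    {F : Module.End R M} {e : M} {q : R[X]}
    (hq : IsMonicOfDegree q (Module.finrank R M)) (hqe : aeval F q e = 0)
    (hsurj : Function.Surjective fun p : R[X] => aeval F p e) : IsCyclicVector F e q where
  surjective := hsurj
  aeval_apply_eq_zero_iff p := by
    have hmul (r : R[X]) : aeval F (q * r) e = 0 := by
      rw [mul_comm, map_mul, Module.End.mul_apply, hqe, map_zero]
    constructor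
    · intro hp
      rw [← modByMonic_eq_zero_iff_dvd hq.monic]
      refine eq_zero_of_aeval_apply_eq_zero_of_degree_lt hq hqe hsurj
        (degree_modByMonic_lt p hq.monic) ?_
      rw [modByMonic_eq_sub_mul_div, map_sub, LinearMap.sub_apply, hp, hmul, sub_zero]
    · rintro ⟨r, rfl⟩
      exact hmul r

variable {F : Module.End R M} {e : M} {q : R[X]} {G : Module.End R N} {e' : N} {g : R[X]}

theorem aeval_apply_mem_range_iff (h : IsCyclicVector F e q) (g p : R[X]) :
    aeval F p e ∈ LinearMap.range (aeval F g) ↔ p ∈ Ideal.span {q, g} := by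
  have hmul (r : R[X]) : aeval F g (aeval F r e) = aeval F (r * g) e := by
    rw [mul_comm, map_mul, Module.End.mul_apply]
  rw [Ideal.mem_span_pair]
  constructor
  · rintro ⟨v, hv⟩
    obtain ⟨b, rfl⟩ := h.surjective v
    have hzero : aeval F (p - b * g) e = 0 := by
      rw [map_sub, LinearMap.sub_apply, ← hv, ← hmul, sub_self]
    obtain ⟨a, ha⟩ := (h.aeval_apply_eq_zero_iff _).mp hzero
    exact ⟨a, b, by linear_combination -ha⟩
  · rintro ⟨a, b, rfl⟩
    have hzero : aeval F (a * q) e = 0 := (h.aeval_apply_eq_zero_iff _).mpr (dvd_mul_left q a)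
    exact ⟨aeval F b e, by rw [hmul, map_add, LinearMap.add_apply, hzero, zero_add]⟩

/-- Both sides are `R[X] ⧸ (q, g)`. -/
theorem nonempty_quotient_range_aeval_equiv (hF : IsCyclicVector F e q)
    (hG : IsCyclicVector G e' g) :
    Nonempty ((M ⧸ LinearMap.range (aeval F g)) ≃ₗ[R] (N ⧸ LinearMap.range (aeval G q))) := by
  let φ : R[X] →ₗ[R] M ⧸ LinearMap.range (aeval F g) :=
    Submodule.mkQ _ ∘ₗ LinearMap.applyₗ e ∘ₗ (aeval F).toLinearMap
  let ψ : R[X] →ₗ[R] N ⧸ LinearMap.range (aeval G q) :=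
    Submodule.mkQ _ ∘ₗ LinearMap.applyₗ e' ∘ₗ (aeval G).toLinearMap
  have hφ : Function.Surjective φ := (Submodule.mkQ_surjective _).comp hF.surjective
  have hψ : Function.Surjective ψ := (Submodule.mkQ_surjective _).comp hG.surjective
  have hker : LinearMap.ker φ = LinearMap.ker ψ := by
    ext p
    calc φ p = 0 ↔ p ∈ Ideal.span {q, g} :=
          (Submodule.Quotient.mk_eq_zero _).trans (hF.aeval_apply_mem_range_iff g p)
      _ ↔ p ∈ Ideal.span {g, q} := by rw [Set.pair_comm]
      _ ↔ ψ p = 0 :=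
          ((Submodule.Quotient.mk_eq_zero _).trans (hG.aeval_apply_mem_range_iff q p)).symm
  exact ⟨(φ.quotKerEquivOfSurjective hφ).symm ≪≫ₗ Submodule.quotEquivOfEq _ _ hker ≪≫ₗ
    ψ.quotKerEquivOfSurjective hψ⟩

end IsCyclicVector

end CyclicVector

section Matrices

open scoped Matrix

variable {R ι : Type*} [CommRing R] [Fintype ι] [DecidableEq ι]

theorem mulVecLin_aeval (M : Matrix ι ι R) (p : R[X]) :
    (aeval M p).mulVecLin = aeval M.mulVecLin p :=
  (aeval_algHom_apply (Matrix.toLinAlgEquiv' (R := R) (n := ι)) M p).symm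

theorem mulVecLin_pow_sub_one (M : Matrix ι ι R) (n : ℕ) :
    (M ^ n - 1).mulVecLin = aeval M.mulVecLin (X ^ n - 1 : R[X]) := by
  rw [← mulVecLin_aeval]
  simp

theorem range_mulVecLin_mul_pow_of_mul_eq_one {P Q : Matrix ι ι R} (h : P * Q = 1)
    (M : Matrix ι ι R) (m : ℕ) :
    LinearMap.range (M * P ^ m).mulVecLin = LinearMap.range M.mulVecLin := by
  rw [Matrix.mulVecLin_mul]
  refine LinearMap.range_comp_of_range_eq_top _ (LinearMap.range_eq_top.mpr fun v => ?_)
  exact ⟨Q ^ m *ᵥ v, by simp [pow_mul_pow_eq_one m h]⟩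

/-- The isomorphism is induced by `(v, w) ↦ v + A w`. -/
theorem nonempty_quotient_range_fromBlocks_equiv (A D : Matrix ι ι R) :
    Nonempty (((ι ⊕ ι → R) ⧸ LinearMap.range (Matrix.fromBlocks A (-1) (-1) D).mulVecLin) ≃ₗ[R]
      ((ι → R) ⧸ LinearMap.range (A * D - 1).mulVecLin)) := by
  let f : (ι ⊕ ι → R) →ₗ[R] (ι → R) ⧸ LinearMap.range (A * D - 1).mulVecLin :=
    Submodule.mkQ _ ∘ₗ
      (LinearMap.funLeft R R Sum.inl + A.mulVecLin ∘ₗ LinearMap.funLeft R R Sum.inr)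
  have hf : Function.Surjective f := by
    refine (Submodule.mkQ_surjective _).comp fun v => ⟨Sum.elim v 0, ?_⟩
    ext i
    simp [LinearMap.funLeft]
  have hker : LinearMap.range (Matrix.fromBlocks A (-1) (-1) D).mulVecLin = LinearMap.ker f := by
    ext v
    obtain ⟨v, w, rfl⟩ : ∃ x y, v = Sum.elim x y := ⟨_, _, (Sum.elim_comp_inl_inr v).symm⟩
    have hfv : f (Sum.elim v w) = 0 ↔ ∃ y, (A * D - 1) *ᵥ y = v + A *ᵥ w :=
      Submodule.Quotient.mk_eq_zero _
    have hL (x y : ι → R) : (Matrix.fromBlocks A (-1) (-1) D).mulVecLin (Sum.elim x y) =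
        Sum.elim (A *ᵥ x - y) (D *ᵥ y - x) := by
      ext (i | i) <;>
        simp [Matrix.fromBlocks_mulVec, Matrix.neg_mulVec, ← sub_eq_add_neg, ← sub_eq_neg_add]
    rw [LinearMap.mem_ker, hfv]
    constructor
    · rintro ⟨x, hx⟩
      obtain ⟨x, y, rfl⟩ : ∃ x₁ x₂, x = Sum.elim x₁ x₂ := ⟨_, _, (Sum.elim_comp_inl_inr x).symm⟩
      rw [hL] at hx
      obtain rfl : A *ᵥ x - y = v := funext fun i => congrFun hx (Sum.inl i)
      obtain rfl : D *ᵥ y - x = w := funext fun i => congrFun hx (Sum.inr i)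
      refine ⟨y, ?_⟩
      simp [Matrix.sub_mulVec, Matrix.mulVec_sub]
    · rintro ⟨y, hy⟩
      refine ⟨Sum.elim (D *ᵥ y - w) y, ?_⟩
      have hv : A *ᵥ D *ᵥ y - y - A *ᵥ w = v := by
        rw [sub_eq_iff_eq_add, ← hy, Matrix.sub_mulVec, Matrix.one_mulVec, Matrix.mulVec_mulVec]
      rw [hL, Matrix.mulVec_sub, sub_right_comm, hv, sub_sub_cancel]
  exact ⟨Submodule.quotEquivOfEq _ _ hker ≪≫ₗ f.quotKerEquivOfSurjective hf⟩

end Matrices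

section Companion

open scoped Matrix

variable {R : Type*} [CommRing R]

/-- The `j`-th Horner polynomial `a_j + a_{j+1} X + a_{j+2} X² + ⋯` of `q = a_0 + a_1 X + ⋯`. -/
noncomputable def horner (q : R[X]) (j : ℕ) : R[X] := divX^[j] q

theorem horner_succ (q : R[X]) (j : ℕ) : horner q (j + 1) = divX (horner q j) :=
  Function.iterate_succ_apply' divX j q

theorem coeff_horner (q : R[X]) (j i : ℕ) : (horner q j).coeff i = q.coeff (i + j) := by
  induction j generalizing i with
  | zero => rfl
  | succ j ih => rw [horner_succ, coeff_divX, ih, add_right_comm, add_assoc]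

theorem horner_eq_X_mul_add (q : R[X]) (j : ℕ) :
    horner q j = X * horner q (j + 1) + C (q.coeff j) := by
  have h := X_mul_divX_add (horner q j)
  rw [← horner_succ, coeff_horner, zero_add] at h
  exact h.symm

theorem horner_of_isMonicOfDegree {q : R[X]} {d : ℕ} (hq : IsMonicOfDegree q d) :
    horner q d = 1 := by
  nontriviality R
  ext i
  rw [coeff_horner, hq.coeff_eq (isMonicOfDegree_X_pow R d) (Nat.le_add_left d i), coeff_X_pow,
    coeff_one]
  simp

/-- The companion matrix of a monic polynomial `q` of degree `d + 1`, with the coefficients of `q`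
in the last row. -/
def rowCompanion (q : R[X]) (d : ℕ) : Matrix (Fin (d + 1)) (Fin (d + 1)) R :=
  fun i j => if (i : ℕ) = d then -q.coeff j else if (j : ℕ) = i + 1 then 1 else 0

theorem rowCompanion_mulVec_single_zero (q : R[X]) (d : ℕ) :
    rowCompanion q d *ᵥ Pi.single 0 1 = -(q.coeff 0 • Pi.single (Fin.last d) 1) := by
  ext i
  induction i using Fin.lastCases with
  | last => simp [rowCompanion]
  | cast i => simp [rowCompanion, i.isLt.ne, (Fin.castSucc_lt_last i).ne]

theorem rowCompanion_mulVec_single_succ (q : R[X]) (d : ℕ) (j : Fin d) :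
    rowCompanion q d *ᵥ Pi.single j.succ 1 =
      Pi.single j.castSucc 1 - q.coeff (j + 1) • Pi.single (Fin.last d) 1 := by
  ext i
  induction i using Fin.lastCases with
  | last => simp [rowCompanion, (Fin.castSucc_lt_last j).ne']
  | cast i =>
    simp [rowCompanion, Pi.single_apply, i.isLt.ne, (Fin.castSucc_lt_last i).ne, Fin.ext_iff,
      eq_comm]

theorem aeval_horner_apply (q : R[X]) (j : ℕ) {M : Type*} [AddCommGroup M] [Module R M]
    (F : Module.End R M) (e : M) :
    aeval F (horner q j) e = F (aeval F (horner q (j + 1)) e) + q.coeff j • e := by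
  simp [horner_eq_X_mul_add q j]

theorem aeval_rowCompanion_horner {q : R[X]} {d : ℕ} (hq : IsMonicOfDegree q (d + 1))
    (j : Fin (d + 1)) :
    aeval (rowCompanion q d).mulVecLin (horner q (j + 1)) (Pi.single (Fin.last d) 1) =
      Pi.single j 1 := by
  induction j using Fin.reverseInduction with
  | last => simp [horner_of_isMonicOfDegree hq]
  | cast j ih =>
    rw [Fin.val_succ] at ih
    rw [aeval_horner_apply, Fin.val_castSucc, ih, Matrix.mulVecLin_apply,
      rowCompanion_mulVec_single_succ, sub_add_cancel]

theorem aeval_rowCompanion_self {q : R[X]} {d : ℕ} (hq : IsMonicOfDegree q (d + 1)) :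
    aeval (rowCompanion q d).mulVecLin q (Pi.single (Fin.last d) 1) = 0 := by
  have h := aeval_horner_apply q 0 (rowCompanion q d).mulVecLin (Pi.single (Fin.last d) 1)
  have h₀ := aeval_rowCompanion_horner hq 0
  rw [Fin.val_zero] at h₀
  rwa [h₀, Matrix.mulVecLin_apply, rowCompanion_mulVec_single_zero, neg_add_cancel] at h

theorem isCyclicVector_rowCompanion [Nontrivial R] {q : R[X]} {d : ℕ}
    (hq : IsMonicOfDegree q (d + 1)) :
    IsCyclicVector (rowCompanion q d).mulVecLin (Pi.single (Fin.last d) 1) q := by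
  refine .of_surjective (by simpa using hq) (aeval_rowCompanion_self hq) fun v =>
    ⟨∑ j : Fin (d + 1), v j • horner q (j + 1), ?_⟩
  simp only [map_sum, map_smul, LinearMap.sum_apply, LinearMap.smul_apply,
    aeval_rowCompanion_horner hq]
  exact (pi_eq_sum_univ' v).symm

end Companion

section CyclicShift

open scoped Matrix

variable (R : Type*) [CommRing R] (n : ℕ)

/-- The permutation matrix of the rotation of `ZMod n` that sends the basis vector at `i` to the
one at `i + 1`. -/
def cyclicShift : Matrix (ZMod n) (ZMod n) R :=
  Equiv.Perm.permMatrix R (Equiv.subRight (1 : ZMod n))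

variable {R n} [NeZero n]

theorem cyclicShift_mul_transpose : cyclicShift R n * (cyclicShift R n)ᵀ = 1 := by
  rw [cyclicShift, Matrix.transpose_permMatrix, ← Matrix.permMatrix_mul, inv_mul_cancel,
    Matrix.permMatrix_one]

theorem cyclicShift_pow_mulVec (m : ℕ) (v : ZMod n → R) (i : ZMod n) :
    (cyclicShift R n ^ m *ᵥ v) i = v (i - m) := by
  induction m generalizing i with
  | zero => simp
  | succ m ih =>
    rw [pow_succ', ← Matrix.mulVec_mulVec, cyclicShift, Matrix.permMatrix_mulVec, ← cyclicShift]
    simp [ih, sub_sub, add_comm]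

theorem cyclicShift_transpose_pow_mulVec (m : ℕ) (v : ZMod n → R) (i : ZMod n) :
    ((cyclicShift R n)ᵀ ^ m *ᵥ v) i = v (i + m) := by
  have h := cyclicShift_pow_mulVec m ((cyclicShift R n)ᵀ ^ m *ᵥ v) (i + m)
  rw [add_sub_cancel_right] at h
  rw [← h, Matrix.mulVec_mulVec, pow_mul_pow_eq_one m cyclicShift_mul_transpose,
    Matrix.one_mulVec]

theorem three_sub_cyclicShift_pow_mulVec (m : ℕ) (v : ZMod n → R) (i : ZMod n) :
    ((3 - cyclicShift R n ^ m - (cyclicShift R n)ᵀ ^ m) *ᵥ v) i =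
      3 * v i - v (i - m) - v (i + m) := by
  rw [Matrix.sub_mulVec, Matrix.sub_mulVec, Matrix.ofNat_mulVec, Pi.sub_apply, Pi.sub_apply,
    cyclicShift_pow_mulVec, cyclicShift_transpose_pow_mulVec, Pi.smul_apply, smul_eq_mul]

theorem isCyclicVector_cyclicShift [Nontrivial R] :
    IsCyclicVector (cyclicShift R n).mulVecLin (Pi.single 0 1) (X ^ n - 1 : R[X]) := by
  have hpow (m : ℕ) : ((cyclicShift R n).mulVecLin ^ m) (Pi.single 0 1) =
      Pi.single (m : ZMod n) 1 := by
    have h := mulVecLin_aeval (cyclicShift R n) (X ^ m)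
    rw [map_pow, map_pow, aeval_X, aeval_X] at h
    ext i
    rw [← h, Matrix.mulVecLin_apply, cyclicShift_pow_mulVec]
    simp [Pi.single_apply, sub_eq_zero]
  have hmonic : IsMonicOfDegree (X ^ n - 1 : R[X]) n :=
    (isMonicOfDegree_X_pow R n).sub (by simpa using NeZero.pos n)
  refine .of_surjective (by simpa using hmonic) ?_ fun v => ⟨∑ j : ZMod n, v j • X ^ j.val, ?_⟩
  · simp [hpow]
  · simp only [map_sum, map_smul, map_pow, aeval_X, LinearMap.sum_apply, LinearMap.smul_apply,
      hpow, ZMod.natCast_zmod_val]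
    exact (pi_eq_sum_univ' v).symm

end CyclicShift

section CharPoly

/-- The two factors are `-z (3 - z - z⁻¹)` and `-z ^ k (3 - z ^ k - z ^ (-k))`. -/
theorem gpCharPoly_eq_mul_comp_sub (k : ℕ) : gpCharPoly k =
    (X ^ 2 - C 3 * X + C 1) * (X ^ 2 - C 3 * X + C 1 : ℤ[X]).comp (X ^ k) - X ^ (k + 1) := by
  simp only [gpCharPoly, eq_intCast, Int.cast_ofNat, Int.cast_one, add_comp, sub_comp, mul_comp,
    pow_comp, X_comp, one_comp, ofNat_comp, Nat.cast_ofNat]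
  ring

theorem isMonicOfDegree_gpCharPoly {k : ℕ} (hk : k ≠ 0) :
    IsMonicOfDegree (gpCharPoly k) (2 * k + 2) := by
  have hquad : IsMonicOfDegree (X ^ 2 - C 3 * X + C 1 : ℤ[X]) 2 := isMonicOfDegree_sub_add_two 3 1
  rw [gpCharPoly_eq_mul_comp_sub, add_comm (2 * k)]
  refine (hquad.mul (hquad.comp hk (isMonicOfDegree_X_pow ℤ k))).sub ?_
  rw [natDegree_X_pow]
  omega

theorem aeval_gpCharPoly_of_mul_eq_one {A : Type*} [Ring A] [Algebra ℤ A] {u v : A}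
    (h : v * u = 1) (k : ℕ) :
    aeval u (gpCharPoly k) = ((3 - u - v) * (3 - u ^ k - v ^ k) - 1) * u ^ (k + 1) := by
  let f : ℤ[X] := X ^ 2 - C 3 * X + C 1
  have hf {s t : A} (hts : t * s = 1) : aeval s f = -((3 - s - t) * s) := by
    have hf_eval : aeval s f = s * s - 3 * s + 1 := by simp [f, sq, map_ofNat (aeval s)]
    rw [hf_eval, sub_mul, sub_mul, hts]
    abel
  have hcomm : Commute (aeval (u ^ k) f) u := by
    simpa [aeval_comp] using (Commute.all (f.comp (X ^ k)) X).map (aeval u)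
  calc aeval u (gpCharPoly k) = aeval u f * aeval (u ^ k) f - u ^ (k + 1) := by
        rw [gpCharPoly_eq_mul_comp_sub, map_sub, map_mul, aeval_comp, map_pow, map_pow, aeval_X]
    _ = -((3 - u - v) * (aeval (u ^ k) f * u)) - u ^ (k + 1) := by
        rw [hf h, hcomm.eq, neg_mul, mul_assoc]
    _ = ((3 - u - v) * (3 - u ^ k - v ^ k) - 1) * u ^ (k + 1) := by
        rw [hf (pow_mul_pow_eq_one k h), pow_succ]
        noncomm_ring

theorem isCyclicVector_gpCompanion {k : ℕ} (hk : k ≠ 0) :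
    IsCyclicVector (gpCompanion k).mulVecLin (Pi.single (Fin.last (2 * k + 1)) 1) (gpCharPoly k) :=
  isCyclicVector_rowCompanion (isMonicOfDegree_gpCharPoly hk)

end CharPoly

section Laplacian

open scoped Matrix

theorem lapMatrix_mulVec_apply_of_neighborFinset_eq {V R : Type*} [Fintype V] [DecidableEq V]
    [NonAssocRing R] (G : SimpleGraph V) [DecidableRel G.Adj] {v a b c : V}
    (h : G.neighborFinset v = {a, b, c}) (hab : a ≠ b) (hac : a ≠ c) (hbc : b ≠ c) (x : V → R) :
    (G.lapMatrix R *ᵥ x) v = 3 * x v - (x a + x b + x c) := by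
  have hdeg : G.degree v = 3 := by
    rw [← G.card_neighborFinset_eq_degree, h, Finset.card_eq_three]
    exact ⟨a, b, c, hab, hac, hbc, rfl⟩
  rw [G.lapMatrix_mulVec_apply, hdeg, h, Finset.sum_insert (by simp [hab, hac]),
    Finset.sum_pair hbc, add_assoc]
  norm_num

theorem ne_and_eq_add_or_eq_add_iff {G : Type*} [AddGroup G] {a : G} (ha : a ≠ 0) (i j : G) :
    i ≠ j ∧ (j = i + a ∨ i = j + a) ↔ j = i + a ∨ j = i - a := by
  rw [eq_sub_iff_add_eq, eq_comm (a := j + a), and_iff_right_of_imp]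
  rintro h rfl
  simp [ha] at h

theorem add_ne_sub_of_add_self_ne_zero {G : Type*} [AddGroup G] {a : G} (ha : a + a ≠ 0) (i : G) :
    i + a ≠ i - a := by
  rw [sub_eq_add_neg, Ne, add_right_inj, eq_neg_iff_add_eq_zero]
  exact ha

theorem natCast_zmod_ne_zero {n m : ℕ} (hm : 0 < m) (hmn : m < n) : (m : ZMod n) ≠ 0 := by
  rw [Ne, ZMod.natCast_eq_zero_iff]
  exact Nat.not_dvd_of_pos_of_lt hm hmn

variable {n k : ℕ} [NeZero n]

theorem neighborFinset_genPetersen_inl (h : (1 : ZMod n) ≠ 0) (i : ZMod n) :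
    (genPetersen n k).neighborFinset (Sum.inl i) =
      {Sum.inl (i + 1), Sum.inl (i - 1), Sum.inr i} := by
  ext (j | j) <;> rw [SimpleGraph.mem_neighborFinset]
  · simpa [genPetersen, gpRel] using ne_and_eq_add_or_eq_add_iff h i j
  · simp [genPetersen, gpRel]

theorem neighborFinset_genPetersen_inr (h : (k : ZMod n) ≠ 0) (i : ZMod n) :
    (genPetersen n k).neighborFinset (Sum.inr i) =
      {Sum.inr (i + k), Sum.inr (i - k), Sum.inl i} := by
  ext (j | j) <;> rw [SimpleGraph.mem_neighborFinset]
  · simp [genPetersen, gpRel, eq_comm]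
  · simpa [genPetersen, gpRel] using ne_and_eq_add_or_eq_add_iff h i j

theorem lapMatrix_genPetersen (hk : 1 ≤ k) (hkn : 2 * k < n) :
    (genPetersen n k).lapMatrix ℤ =
      Matrix.fromBlocks (3 - cyclicShift ℤ n - (cyclicShift ℤ n)ᵀ) (-1) (-1)
        (3 - cyclicShift ℤ n ^ k - (cyclicShift ℤ n)ᵀ ^ k) := by
  have hne {m : ℕ} (hm : 0 < m) (hmn : 2 * m < n) :
      (m : ZMod n) ≠ 0 ∧ ∀ i : ZMod n, i + m ≠ i - m := by
    refine ⟨natCast_zmod_ne_zero hm (by omega), add_ne_sub_of_add_self_ne_zero ?_⟩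
    rw [← two_mul]
    exact_mod_cast natCast_zmod_ne_zero (by omega) hmn
  obtain ⟨hk_ne, hk_add_ne_sub⟩ := hne hk hkn
  obtain ⟨h1_ne, h1_add_ne_sub⟩ := hne one_pos (by omega)
  rw [Nat.cast_one] at h1_ne
  simp only [Nat.cast_one] at h1_add_ne_sub
  refine Matrix.mulVec_injective (funext fun x => ?_)
  ext (i | i)
  · have hP := three_sub_cyclicShift_pow_mulVec 1 (x ∘ Sum.inl) i
    rw [pow_one, pow_one, Nat.cast_one] at hP
    rw [lapMatrix_mulVec_apply_of_neighborFinset_eq _ (neighborFinset_genPetersen_inl h1_ne i)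
      (by simp [h1_add_ne_sub]) (by simp) (by simp), Matrix.fromBlocks_mulVec, Sum.elim_inl,
      Pi.add_apply, hP, Matrix.neg_mulVec, Matrix.one_mulVec]
    simp only [Function.comp_apply, Pi.neg_apply]
    ring
  · rw [lapMatrix_mulVec_apply_of_neighborFinset_eq _ (neighborFinset_genPetersen_inr hk_ne i)
      (by simp [hk_add_ne_sub]) (by simp) (by simp), Matrix.fromBlocks_mulVec, Sum.elim_inr,
      Pi.add_apply, three_sub_cyclicShift_pow_mulVec, Matrix.neg_mulVec, Matrix.one_mulVec]
    simp only [Function.comp_apply, Pi.neg_apply]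
    ring

end Laplacian

theorem jacobian_iso_general (n k : ℕ) [NeZero n] (hk : 1 ≤ k) (hkn : 2 * k < n) :
    Nonempty (((ZMod n ⊕ ZMod n → ℤ) ⧸
        LinearMap.range (Matrix.mulVecLin ((genPetersen n k).lapMatrix ℤ)))
      ≃ₗ[ℤ] ((Fin (2 * k + 2) → ℤ) ⧸
        LinearMap.range (Matrix.mulVecLin (gpCompanion k ^ n - 1)))) := by
  have hP := cyclicShift_mul_transpose (R := ℤ) (n := n)
  obtain ⟨schur⟩ := nonempty_quotient_range_fromBlocks_equiv
    (3 - cyclicShift ℤ n - (cyclicShift ℤ n).transpose)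
    (3 - cyclicShift ℤ n ^ k - (cyclicShift ℤ n).transpose ^ k)
  obtain ⟨swap⟩ := isCyclicVector_cyclicShift (R := ℤ) (n := n)
    |>.nonempty_quotient_range_aeval_equiv (isCyclicVector_gpCompanion (k := k) (by omega))
  rw [← mulVecLin_aeval, aeval_gpCharPoly_of_mul_eq_one (mul_eq_one_comm.mp hP),
    range_mulVecLin_mul_pow_of_mul_eq_one hP, ← mulVecLin_pow_sub_one] at swap
  rw [lapMatrix_genPetersen hk hkn]
  exact ⟨schur ≪≫ₗ swap⟩

theorem jacobian_iso (n k : ℕ) (hn : 3 ≤ n) (hk : 1 ≤ k) (hkn : 2 * k < n) :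
    haveI : NeZero n := ⟨by omega⟩
    Nonempty (
      (AddCommGroup.torsion ((ZMod n ⊕ ZMod n → ℤ) ⧸
          LinearMap.range (Matrix.mulVecLin ((genPetersen n k).lapMatrix ℤ))))
        ≃+
      (AddCommGroup.torsion ((Fin (2 * k + 2) → ℤ) ⧸
          LinearMap.range (Matrix.mulVecLin (gpCompanion k ^ n - 1))))) := by
  have : NeZero n := ⟨by omega⟩
  obtain ⟨e⟩ := jacobian_iso_general n k hk hkn
  exact ⟨(e.toAddEquiv.addSubgroupMap _).trans (.addSubgroupCongr e.toAddEquiv.map_torsion)⟩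
end

section
/- Let n ≥ 5 be an integer and let α, β ∈ ℤ satisfy T_n((1 + √29)/4) − 1 = (α + β√29)/4 as an equality of real numbers. Then 20·τ(GP(n,2)) = (−1)^n · n · (α² − 29β²), as an equality of integers. -/
open Polynomial

/-- The number of spanning trees of a graph `G`: the number of subgraphs that
contain all vertices and are trees. -/
noncomputable def numSpanningTrees {V : Type*} (G : SimpleGraph V) : ℕ :=
  Nat.card {H : G.Subgraph // H.IsSpanning ∧ H.coe.IsTree}

/-!
A spanning tree is the same thing as the map sending each vertex to its parent once a root is
chosen. Expanding the Laplacian determinant row by row gives a sum over all maps `f` with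
`f v` adjacent to `v`, in which the maps leading every vertex to the root contribute `1` and the
others `0`. Hence `det (L + J) = |V|² τ(G)`, with `J` the all-ones matrix.

For `GP(n,k)` the matrix `L + J` consists of four circulant blocks. The discrete Fourier transform
diagonalises all of them, so that, with `λ_j = 2 cos (2πj/n)`,
`n τ(GP(n,k)) = ∏_{j ≠ 0} ((3 - λ_j)(3 - λ_{kj}) - 1)`.
For `k = 2` we have `λ_{2j} = λ_j² - 2`, and the factor becomes
`-(2 - λ_j)(λ_j² - λ_j - 7) = -(2 - λ_j)(2x - λ_j)(2y - λ_j)` with `x, y = (1 ± √29)/4`.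
The product formula `∏_j (2x - λ_j) = 2 (T_n(x) - 1)` evaluates these products, and
`T_n(y) - 1` is the conjugate of `T_n(x) - 1` in `ℚ(√29)`.
-/

/-! ### Spanning trees and parent functions -/

section ParentFunctions

variable {V : Type*} {r : V} {f g : V → V} {G T : SimpleGraph V}

/-- Iterating `f` leads from every vertex to `r`. For a map fixing `r` this says that `f` sends
each vertex to its parent in a tree rooted at `r`. -/
def ReachesRoot (f : V → V) (r : V) : Prop :=
  ∀ v, ∃ k, f^[k] v = r

lemma reachesRoot_iff_exists_depth :
    ReachesRoot f r ↔ ∃ d : V → ℕ, ∀ v ≠ r, d (f v) < d v := by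
  classical
  constructor
  · refine fun h ↦ ⟨fun v ↦ Nat.find (h v), fun v hv ↦ ?_⟩
    obtain ⟨k, hk⟩ := Nat.exists_eq_succ_of_ne_zero fun h0 ↦ hv ((Nat.find_eq_zero (h v)).mp h0)
    have hspec : f^[Nat.find (h v)] v = r := Nat.find_spec (h v)
    rw [hk, Function.iterate_succ_apply] at hspec
    calc Nat.find (h (f v)) ≤ k := Nat.find_min' _ hspec
      _ < Nat.find (h v) := hk ▸ Nat.lt_succ_self k
  · rintro ⟨d, hd⟩ v
    induction hv : d v using Nat.strong_induction_on generalizing v with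
    | _ m ih =>
      by_cases hvr : v = r
      · exact ⟨0, hvr⟩
      · obtain ⟨k, hk⟩ := ih _ (hv ▸ hd v hvr) (f v) rfl
        exact ⟨k + 1, hk⟩

lemma ReachesRoot.induction {P : V → Prop} (h : ReachesRoot f r) (root : P r)
    (step : ∀ v ≠ r, P (f v) → P v) (v : V) : P v := by
  obtain ⟨k, hk⟩ := h v
  induction k generalizing v with
  | zero => rwa [show v = r from hk]
  | succ k ih =>
    by_cases hv : v = r
    · exact hv ▸ root
    · exact step v hv (ih (f v) hk)

lemma ReachesRoot.apply_apply_ne (h : ReachesRoot f r) (hr : f r = r) {v : V} (hv : v ≠ r) :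
    f (f v) ≠ v := by
  obtain ⟨d, hd⟩ := reachesRoot_iff_exists_depth.mp h
  intro hffv
  have hfv : f v ≠ r := fun hfv ↦ hv (by rw [← hffv, hfv, hr])
  have := (hd (f v) hfv).trans (hd v hv)
  exact this.ne (by rw [hffv])

/-- The graph joining each vertex `v` to its parent `f v`. -/
def parentGraph (f : V → V) : SimpleGraph V :=
  SimpleGraph.fromRel fun a b ↦ f a = b

lemma parentGraph_adj_apply {v : V} (h : v ≠ f v) : (parentGraph f).Adj v (f v) :=
  ⟨h, Or.inl rfl⟩

lemma ReachesRoot.connected_parentGraph (h : ReachesRoot f r) : (parentGraph f).Connected := by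
  have reachable_root (v : V) : (parentGraph f).Reachable v r := by
    refine h.induction (P := ((parentGraph f).Reachable · r)) (SimpleGraph.Reachable.refl r)
      (fun v _ hfv ↦ ?_) v
    by_cases hv : v = f v
    · rwa [hv]
    · exact (parentGraph_adj_apply hv).reachable.trans hfv
  have : Nonempty V := ⟨r⟩
  exact ⟨fun u v ↦ (reachable_root u).trans (reachable_root v).symm⟩

/-- `f` sends each vertex of a spanning tree of `G` rooted at `r` to its parent; the root is its
own parent. -/
structure IsParentFn (G : SimpleGraph V) (r : V) (f : V → V) : Prop where
  map_root : f r = r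
  adj : ∀ v ≠ r, G.Adj v (f v)
  reachesRoot : ReachesRoot f r

lemma IsParentFn.mono {H : SimpleGraph V} (hf : IsParentFn G r f) (h : G ≤ H) :
    IsParentFn H r f :=
  ⟨hf.map_root, fun v hv ↦ h (hf.adj v hv), hf.reachesRoot⟩

lemma IsParentFn.edgeSet_parentGraph_subset (hf : IsParentFn G r f) :
    (parentGraph f).edgeSet ⊆ (fun v ↦ s(v, f v)) '' {r}ᶜ := by
  have ne_root {a : V} (ha : a ≠ f a) : a ≠ r := by
    rintro rfl
    exact ha hf.map_root.symm
  intro e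
  induction e using Sym2.ind with
  | _ a b =>
    intro hadj
    obtain ⟨hab, rfl | rfl⟩ := (parentGraph f).mem_edgeSet.mp hadj
    · exact ⟨a, ne_root hab, rfl⟩
    · exact ⟨b, ne_root hab.symm, Sym2.eq_swap⟩

lemma IsParentFn.parentGraph_le (hf : IsParentFn G r f) : parentGraph f ≤ G := by
  rw [← SimpleGraph.edgeSet_subset_edgeSet]
  rintro e he
  obtain ⟨v, hv, rfl⟩ := hf.edgeSet_parentGraph_subset he
  exact hf.adj v hv

lemma IsParentFn.isTree_parentGraph [Finite V] (hf : IsParentFn G r f) :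
    (parentGraph f).IsTree := by
  have hconn := hf.reachesRoot.connected_parentGraph
  refine SimpleGraph.isTree_iff_connected_and_card.mpr
    ⟨hconn, le_antisymm ?_ hconn.card_vert_le_card_edgeSet_add_one⟩
  calc (parentGraph f).edgeSet.ncard + 1
      ≤ ((fun v ↦ s(v, f v)) '' {r}ᶜ).ncard + 1 := by
        gcongr
        exacts [Set.toFinite _, hf.edgeSet_parentGraph_subset]
    _ ≤ ({r}ᶜ : Set V).ncard + 1 := by gcongr; exact Set.ncard_image_le
    _ = Nat.card V := by rw [← Set.ncard_singleton r, add_comm, Set.ncard_add_ncard_compl]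

lemma IsParentFn.eq_of_parentGraph_eq (hf : IsParentFn G r f) (hg : IsParentFn G r g)
    (h : parentGraph f = parentGraph g) : f = g := by
  -- Once `f` and `g` agree at `f v`, the edge `v — f v` of `parentGraph g` can only come from
  -- `g v = f v`: coming from `g (f v) = v` it would give `f (f v) = v`.
  refine funext <| hf.reachesRoot.induction (hf.map_root.trans hg.map_root.symm) fun v hv ih ↦ ?_
  have hadj : (parentGraph g).Adj v (f v) := h ▸ parentGraph_adj_apply (hf.adj v hv).ne
  obtain hgv | hgfv := hadj.2
  · exact hgv.symm
  · exact absurd (ih.trans hgfv) (hf.reachesRoot.apply_apply_ne hf.map_root hv)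

lemma exists_isParentFn_of_connected (hT : T.Connected) (r : V) : ∃ f, IsParentFn T r f := by
  have exists_closer (v : V) (hv : v ≠ r) : ∃ w, T.Adj v w ∧ T.dist w r < T.dist v r := by
    obtain ⟨p, hp⟩ := hT.exists_walk_length_eq_dist v r
    cases p with
    | nil => exact absurd rfl hv
    | cons hadj q => exact ⟨_, hadj, hp ▸ Nat.lt_succ_of_le (SimpleGraph.dist_le q)⟩
  classical
  choose! f hadj hdist using exists_closer
  refine ⟨Function.update f r r, by simp, fun v hv ↦ by simpa [hv] using hadj v hv,
    reachesRoot_iff_exists_depth.mpr ⟨(T.dist · r), fun v hv ↦ by simpa [hv] using hdist v hv⟩⟩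

lemma exists_isParentFn_parentGraph_eq (hT : T.IsTree) (r : V) :
    ∃ f, IsParentFn T r f ∧ parentGraph f = T := by
  obtain ⟨f, hf⟩ := exists_isParentFn_of_connected hT.connected r
  have hmin := SimpleGraph.isTree_iff_minimal_connected.mp hT
  exact ⟨f, hf, hf.parentGraph_le.antisymm
    (hmin.2 hf.reachesRoot.connected_parentGraph hf.parentGraph_le)⟩

lemma numSpanningTrees_eq_card_isTree_le (G : SimpleGraph V) :
    numSpanningTrees G = Nat.card {T : SimpleGraph V // T ≤ G ∧ T.IsTree} := by
  have isTree_spanningCoe_iff {H : G.Subgraph} (hH : H.IsSpanning) :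
      H.spanningCoe.IsTree ↔ H.coe.IsTree :=
    (SimpleGraph.Subgraph.spanningCoeEquivCoeOfSpanning H hH).isTree_iff
  refine Nat.card_congr
    { toFun := fun H ↦ ⟨H.1.spanningCoe, H.1.spanningCoe_le,
        (isTree_spanningCoe_iff H.2.1).mpr H.2.2⟩
      invFun := fun T ↦ ⟨SimpleGraph.toSubgraph T.1 T.2.1,
        SimpleGraph.toSubgraph.isSpanning T.1 T.2.1,
        (isTree_spanningCoe_iff (SimpleGraph.toSubgraph.isSpanning T.1 T.2.1)).mp T.2.2⟩
      left_inv := fun H ↦ Subtype.ext (SimpleGraph.Subgraph.ext ?_ rfl)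
      right_inv := fun T ↦ rfl }
  exact (Set.eq_univ_of_forall H.2.1).symm

lemma numSpanningTrees_eq_card_isParentFn [Finite V] (G : SimpleGraph V) (r : V) :
    numSpanningTrees G = Nat.card {f : V → V // IsParentFn G r f} := by
  rw [numSpanningTrees_eq_card_isTree_le]
  refine (Nat.card_eq_of_bijective
    (fun f ↦ ⟨parentGraph f.1, f.2.parentGraph_le, f.2.isTree_parentGraph⟩)
    ⟨fun f g hfg ↦ ?_, fun ⟨T, hle, hT⟩ ↦ ?_⟩).symm
  · exact Subtype.ext (f.2.eq_of_parentGraph_eq g.2 (congrArg Subtype.val hfg))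
  · obtain ⟨f, hf, rfl⟩ := exists_isParentFn_parentGraph_eq hT r
    exact ⟨⟨f, hf.mono hle⟩, rfl⟩

end ParentFunctions

/-! ### The matrix tree theorem -/

section MatrixTree

variable {V R : Type*} [DecidableEq V] [CommRing R]

/-- Row `v` of the Laplacian of the graph whose only edge is `v — u`, except that the row of the
root `r` is replaced by a basis vector. -/
def rootedEdgeRow (R : Type*) [CommRing R] (r v u : V) : V → R :=
  if v = r then Pi.single r 1 else Pi.single v 1 - Pi.single u 1

/-- The Laplacian of the parent function `f`, with the row of the root `r` replaced by a basis
vector. -/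
def parentMatrix (R : Type*) [CommRing R] (r : V) (f : V → V) : Matrix V V R :=
  Matrix.of fun v ↦ rootedEdgeRow R r v (f v)

lemma parentMatrix_apply_self {r : V} {f : V → V} {v : V} (hv : v ≠ r → f v ≠ v) :
    parentMatrix R r f v v = 1 := by
  by_cases hvr : v = r
  · simp [parentMatrix, rootedEdgeRow, hvr]
  · simp [parentMatrix, rootedEdgeRow, hvr, Pi.single_eq_of_ne (hv hvr).symm]

lemma parentMatrix_apply_eq_zero {r : V} {f : V → V} {v w : V} (hvw : w ≠ v)
    (hw : v ≠ r → w ≠ f v) : parentMatrix R r f v w = 0 := by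
  by_cases hvr : v = r
  · subst hvr
    simp [parentMatrix, rootedEdgeRow, hvw]
  · simp [parentMatrix, rootedEdgeRow, hvr, hvw, hw hvr]

variable [Fintype V]

lemma parentMatrix_mulVec_apply (r : V) (f : V → V) (x : V → R) (v : V) :
    (parentMatrix R r f).mulVec x v = if v = r then x r else x v - x (f v) := by
  change rootedEdgeRow R r v (f v) ⬝ᵥ x = _
  unfold rootedEdgeRow
  split_ifs <;> simp [sub_dotProduct]

lemma ReachesRoot.det_parentMatrix {r : V} {f : V → V} (h : ReachesRoot f r) :
    (parentMatrix R r f).det = 1 := by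
  obtain ⟨d, hd⟩ := reachesRoot_iff_exists_depth.mp h
  have apply_eq_zero {v w : V} (hvw : d v ≤ d w) (hne : w ≠ v) :
      parentMatrix R r f v w = 0 :=
    parentMatrix_apply_eq_zero hne fun hv hw ↦ (hd v hv).not_ge (hw ▸ hvw)
  have htri : (parentMatrix R r f).BlockTriangular (OrderDual.toDual ∘ d) := fun v w hvw ↦
    apply_eq_zero (le_of_lt hvw) (by rintro rfl; exact lt_irrefl _ hvw)
  rw [htri.det]
  refine Finset.prod_eq_one fun a _ ↦ ?_
  suffices hblock : (parentMatrix R r f).toSquareBlock (OrderDual.toDual ∘ d) a = 1 by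
    rw [hblock, Matrix.det_one]
  ext ⟨v, hv⟩ ⟨w, hw⟩
  rw [Matrix.toSquareBlock_def, Matrix.of_apply]
  obtain rfl | hne := eq_or_ne v w
  · rw [Matrix.one_apply_eq]
    exact parentMatrix_apply_self fun hvr hfv ↦ (hd v hvr).ne (by rw [hfv])
  · have hdvw : d v = d w := OrderDual.toDual.injective (hv.trans hw.symm)
    rw [Matrix.one_apply_ne fun h ↦ hne (congrArg Subtype.val h)]
    exact apply_eq_zero hdvw.le hne.symm

lemma det_parentMatrix_of_not_reachesRoot {r : V} {f : V → V} (h : ¬ReachesRoot f r) :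
    (parentMatrix R r f).det = 0 := by
  classical
  -- The indicator of the vertices that never reach `r` spans a kernel vector.
  let x : V → R := fun v ↦ if ∃ k, f^[k] v = r then 0 else 1
  obtain ⟨v₀, hv₀⟩ := not_forall.mp h
  have hx : (parentMatrix R r f).mulVec x = 0 := by
    funext v
    have reaches_iff (hv : v ≠ r) : (∃ k, f^[k] v = r) ↔ ∃ k, f^[k] (f v) = r := by
      refine ⟨fun ⟨k, hk⟩ ↦ ?_, fun ⟨k, hk⟩ ↦ ⟨k + 1, hk⟩⟩
      cases k with
      | zero => exact absurd hk hv
      | succ k => exact ⟨k, hk⟩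
    rw [parentMatrix_mulVec_apply, Pi.zero_apply]
    split_ifs with hv
    · exact if_pos ⟨0, rfl⟩
    · simp only [x, reaches_iff hv, sub_self]
  have hx₀ : x v₀ = 1 := if_neg hv₀
  exact Matrix.det_eq_zero_of_mulVec_eq_zero_of_mem_nonZeroDivisors hx (i := v₀)
    (hx₀ ▸ one_mem _)

lemma det_of_sum_rows {ι : Type*} (s : V → Finset ι) (g : V → ι → V → R) :
    (Matrix.of fun v ↦ ∑ u ∈ s v, g v u).det =
      ∑ f ∈ Fintype.piFinset s, (Matrix.of fun v ↦ g v (f v)).det := by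
  classical
  exact (Matrix.detRowAlternating (R := R) (n := V)).toMultilinearMap.map_sum_finset g s

variable (G : SimpleGraph V) [DecidableRel G.Adj]

lemma updateRow_lapMatrix_single (r : V) :
    (G.lapMatrix R).updateRow r (Pi.single r 1) =
      Matrix.of fun v ↦ ∑ u ∈ if v = r then {r} else G.neighborFinset v, rootedEdgeRow R r v u := by
  ext v w
  obtain rfl | hv := eq_or_ne v r
  · simp [rootedEdgeRow]
  · simp [rootedEdgeRow, hv, SimpleGraph.lapMatrix, SimpleGraph.degMatrix, Matrix.diagonal_apply,
      Pi.single_apply, Finset.sum_apply, eq_comm (a := w)]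

theorem adjugate_lapMatrix_self (r : V) :
    (G.lapMatrix R).adjugate r r = numSpanningTrees G := by
  classical
  have isParentFn_iff (f : V → V) : IsParentFn G r f ↔
      f ∈ Fintype.piFinset (fun v ↦ if v = r then {r} else G.neighborFinset v) ∧
        ReachesRoot f r := by
    rw [Fintype.mem_piFinset]
    refine ⟨fun hf ↦ ⟨fun v ↦ ?_, hf.reachesRoot⟩, fun ⟨hf, hr⟩ ↦ ⟨?_, fun v hv ↦ ?_, hr⟩⟩
    · obtain rfl | hv := eq_or_ne v r
      · simpa using hf.map_root
      · simpa [hv] using hf.adj v hv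
    · simpa using hf r
    · simpa [hv] using hf v
  have det_parentMatrix (f : V → V) :
      (parentMatrix R r f).det = if ReachesRoot f r then 1 else 0 := by
    split_ifs with h
    exacts [h.det_parentMatrix, det_parentMatrix_of_not_reachesRoot h]
  calc (G.lapMatrix R).adjugate r r
      = ((G.lapMatrix R).updateRow r (Pi.single r 1)).det := Matrix.adjugate_apply _ r r
    _ = ∑ f ∈ Fintype.piFinset fun v ↦ if v = r then {r} else G.neighborFinset v,
          (parentMatrix R r f).det := by rw [updateRow_lapMatrix_single, det_of_sum_rows]; rfl
    _ = numSpanningTrees G := by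
      simp only [det_parentMatrix, Finset.sum_boole, numSpanningTrees_eq_card_isParentFn G r,
        isParentFn_iff, Nat.card_eq_fintype_card, Fintype.card_subtype, ← Finset.filter_filter,
        Finset.filter_univ_mem]

lemma det_updateRow_one {L : Matrix V V R} {r : V} (hrow : ∀ i ≠ r, ∑ j, L i j = 0) :
    (L.updateRow r fun _ ↦ 1).det = Fintype.card V * L.adjugate r r := by
  have sum_col : (fun i ↦ ∑ j, L.updateRow r (fun _ ↦ 1) i j) =
      (Fintype.card V : R) • Pi.single r 1 := by
    funext i
    obtain rfl | hi := eq_or_ne i r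
    · simp
    · simp [hi, hrow i hi]
  calc (L.updateRow r fun _ ↦ 1).det
      = ((L.updateRow r fun _ ↦ 1).updateCol r
          ((Fintype.card V : R) • Pi.single r 1)).det := by
        have := Matrix.det_updateCol_sum (L.updateRow r fun _ ↦ 1) r fun _ ↦ (1 : R)
        simpa [← sum_col] using this.symm
    _ = Fintype.card V * L.adjugate r r := by
        rw [Matrix.det_updateCol_smul, ← Matrix.cramer_apply, Matrix.cramer_eq_adjugate_mulVec,
          Matrix.mulVec_single_one, Matrix.col_apply, Matrix.adjugate_apply,
          Matrix.adjugate_apply, Matrix.updateRow_idem]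

lemma det_add_of_one {L : Matrix V V R} (hrow : ∀ i, ∑ j, L i j = 0)
    (hcol : ∀ j, ∑ i, L i j = 0) (r : V) :
    (L + Matrix.of fun _ _ ↦ 1).det = (Fintype.card V : R) ^ 2 * L.adjugate r r := by
  set J : Matrix V V R := Matrix.of fun _ _ ↦ 1
  have sum_row : ∑ i, (1 : R) • (L + J).row i = (Fintype.card V : R) • fun _ ↦ 1 := by
    funext j
    simp [J, Finset.sum_apply, Finset.sum_add_distrib, hcol]
  calc (L + J).det
      = ((L + J).updateRow r ((Fintype.card V : R) • fun _ ↦ 1)).det := by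
        rw [← sum_row]
        exact ((Matrix.det_updateRow_sum (L + J) r fun _ ↦ (1 : R)).trans (one_smul ..)).symm
    _ = Fintype.card V * ((L + J).updateRow r fun _ ↦ 1).det := Matrix.det_updateRow_smul ..
    _ = Fintype.card V * (L.updateRow r fun _ ↦ 1).det := by
        congr 1
        refine Matrix.det_eq_of_forall_row_eq_smul_add_const (Function.update 1 r 0) r (by simp)
          fun i j ↦ ?_
        obtain rfl | hi := eq_or_ne i r
        · simp
        · simp [hi, J]
    _ = (Fintype.card V : R) ^ 2 * L.adjugate r r := by
        rw [det_updateRow_one fun i _ ↦ hrow i, sq, mul_assoc]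

theorem det_lapMatrix_add_of_one [Nonempty V] :
    (G.lapMatrix R + Matrix.of fun _ _ ↦ 1).det =
      (Fintype.card V : R) ^ 2 * numSpanningTrees G := by
  have sum_row (i : V) : ∑ j, G.lapMatrix R i j = 0 := by
    simpa [Matrix.mulVec, dotProduct] using congrFun (G.lapMatrix_mulVec_const_eq_zero (R := R)) i
  have sum_col (j : V) : ∑ i, G.lapMatrix R i j = 0 := by
    simpa only [(G.isSymm_lapMatrix (R := R)).apply] using sum_row j
  rw [det_add_of_one sum_row sum_col (Classical.arbitrary V), adjugate_lapMatrix_self]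

end MatrixTree

/-! ### Circulant blocks and the discrete Fourier transform -/

section Fourier

open ZMod

lemma det_fromBlocks_diagonal {m R : Type*} [Fintype m] [DecidableEq m] [CommRing R]
    (a b c d : m → R) :
    (Matrix.fromBlocks (Matrix.diagonal a) (Matrix.diagonal b) (Matrix.diagonal c)
      (Matrix.diagonal d)).det = ∏ j, (a j * d j - b j * c j) := by
  let e : m ⊕ m ≃ Fin 2 × m :=
    (Equiv.boolProdEquivSum m).symm.trans (finTwoEquiv.symm.prodCongr (Equiv.refl m))
  have hblock : Matrix.fromBlocks (Matrix.diagonal a) (Matrix.diagonal b) (Matrix.diagonal c)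
      (Matrix.diagonal d) =
      (Matrix.blockDiagonal fun k ↦ !![a k, b k; c k, d k]).submatrix e e := by
    ext (i | i) (j | j) <;> by_cases hij : i = j <;>
      simp [e, Matrix.blockDiagonal_apply, hij, finTwoEquiv]
  simp [hblock, Matrix.det_submatrix_equiv_self, Matrix.det_blockDiagonal, Matrix.det_fin_two_of]

variable {n : ℕ} [NeZero n]

/-- The matrix of the discrete Fourier transform on `ZMod n`. -/
noncomputable def fourierMatrix (n : ℕ) [NeZero n] : Matrix (ZMod n) (ZMod n) ℂ :=
  LinearMap.toMatrix' (dft : (ZMod n → ℂ) ≃ₗ[ℂ] (ZMod n → ℂ)).toLinearMap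

lemma dft_single_one (m k : ZMod n) :
    𝓕 (Pi.single m 1 : ZMod n → ℂ) k = stdAddChar (-(m * k)) := by
  simp [dft_apply, Pi.single_apply]

lemma dft_one (k : ZMod n) : 𝓕 (1 : ZMod n → ℂ) k = if k = 0 then (n : ℂ) else 0 := by
  have := AddChar.sum_mulShift (-k) (isPrimitive_stdAddChar n)
  simpa [dft_apply, ZMod.card] using this

lemma fourierMatrix_apply (k j : ZMod n) : fourierMatrix n k j = stdAddChar (-(j * k)) := by
  rw [fourierMatrix, LinearMap.toMatrix'_apply, ← dft_single_one]
  congr! 2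

lemma det_fourierMatrix_ne_zero : (fourierMatrix n).det ≠ 0 := by
  rw [fourierMatrix, LinearMap.det_toMatrix']
  exact (LinearEquiv.isUnit_det' _).ne_zero

lemma fourierMatrix_mul_circulant (v : ZMod n → ℂ) :
    fourierMatrix n * Matrix.circulant v = Matrix.diagonal (𝓕 v) * fourierMatrix n := by
  ext k j
  rw [Matrix.mul_apply, Matrix.diagonal_mul, fourierMatrix_apply, dft_apply, Finset.sum_mul]
  refine Fintype.sum_equiv (Equiv.subRight j) _ _ fun i ↦ ?_
  rw [fourierMatrix_apply, Matrix.circulant_apply, Equiv.subRight_apply, smul_eq_mul,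
    mul_right_comm, ← AddChar.map_add_eq_mul]
  ring_nf

lemma det_fromBlocks_circulant (a b c d : ZMod n → ℂ) :
    (Matrix.fromBlocks (Matrix.circulant a) (Matrix.circulant b) (Matrix.circulant c)
      (Matrix.circulant d)).det = ∏ j, (𝓕 a j * 𝓕 d j - 𝓕 b j * 𝓕 c j) := by
  let F := Matrix.fromBlocks (fourierMatrix n) 0 0 (fourierMatrix n)
  have hF : F.det ≠ 0 := by
    rw [Matrix.det_fromBlocks_zero₂₁]
    exact mul_ne_zero det_fourierMatrix_ne_zero det_fourierMatrix_ne_zero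
  have hconj : F * Matrix.fromBlocks (Matrix.circulant a) (Matrix.circulant b)
        (Matrix.circulant c) (Matrix.circulant d) =
      Matrix.fromBlocks (Matrix.diagonal (𝓕 a)) (Matrix.diagonal (𝓕 b))
        (Matrix.diagonal (𝓕 c)) (Matrix.diagonal (𝓕 d)) * F := by
    simp [F, Matrix.fromBlocks_multiply, fourierMatrix_mul_circulant]
  refine mul_left_cancel₀ hF ?_
  rw [← Matrix.det_mul, hconj, Matrix.det_mul, det_fromBlocks_diagonal, mul_comm]

/-- The eigenvalue `2 cos (2πj/n)` of the adjacency matrix of the `n`-cycle. -/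
noncomputable def cycleEigenvalue (j : ZMod n) : ℂ :=
  stdAddChar j + stdAddChar (-j)

lemma stdAddChar_mul_stdAddChar_neg (j : ZMod n) :
    (stdAddChar j : ℂ) * stdAddChar (-j) = 1 := by
  rw [← AddChar.map_add_eq_mul, add_neg_cancel, AddChar.map_zero_eq_one]

lemma cycleEigenvalue_zero : cycleEigenvalue (0 : ZMod n) = 2 := by
  simp [cycleEigenvalue, one_add_one_eq_two]

lemma cycleEigenvalue_two_mul (j : ZMod n) :
    cycleEigenvalue (2 * j) = cycleEigenvalue j ^ 2 - 2 := by
  rw [cycleEigenvalue, cycleEigenvalue, two_mul, neg_add, AddChar.map_add_eq_mul,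
    AddChar.map_add_eq_mul]
  linear_combination -2 * stdAddChar_mul_stdAddChar_neg j

end Fourier

section GenPetersen

open ZMod

variable {n k : ℕ}

/-- The connection function of the circulant graph on `ZMod n` with edges `i — i + m`: its
circulant matrix is the adjacency matrix when `m ≠ -m`. -/
def stepIndicator (R : Type*) [CommRing R] (m : ZMod n) : ZMod n → R :=
  Pi.single m 1 + Pi.single (-m) 1

lemma stepIndicator_sub (R : Type*) [CommRing R] {m : ZMod n} (hm : 2 * m ≠ 0) (i j : ZMod n) :
    stepIndicator R m (i - j) = if i ≠ j ∧ (j = i + m ∨ i = j + m) then 1 else 0 := by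
  have hm0 : m ≠ 0 := by rintro rfl; simp at hm
  have hneg : m ≠ -m := fun h ↦ hm (by linear_combination h)
  obtain ⟨d, rfl⟩ : ∃ d, i = j + d := ⟨i - j, (add_sub_cancel j i).symm⟩
  have right_iff : j = j + d + m ↔ d = -m := by
    rw [add_assoc, left_eq_add, eq_neg_iff_add_eq_zero]
  simp only [stepIndicator, Pi.add_apply, Pi.single_apply, add_sub_cancel_left, right_iff,
    add_right_inj, ne_eq, add_eq_left]
  by_cases hd : d = m
  · simp [hd, hneg, hm0]
  · by_cases hd' : d = -m <;> simp [hd, hd', hm0, hneg.symm]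

lemma adjMatrix_genPetersen (R : Type*) [CommRing R] (hk : (2 * k : ZMod n) ≠ 0) :
    (genPetersen n k).adjMatrix R =
      Matrix.fromBlocks (Matrix.circulant (stepIndicator R 1)) 1 1
        (Matrix.circulant (stepIndicator R k)) := by
  have h2 : (2 * 1 : ZMod n) ≠ 0 := fun h ↦ hk (by linear_combination (k : ZMod n) * h)
  ext (i | i) (j | j) <;> rw [SimpleGraph.adjMatrix_apply]
  · simp [genPetersen, gpRel, stepIndicator_sub R h2]
  · simp [genPetersen, gpRel, Matrix.one_apply, eq_comm]
  · simp [genPetersen, gpRel, Matrix.one_apply, eq_comm]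
  · simp [genPetersen, gpRel, stepIndicator_sub R hk]

variable [NeZero n]

lemma dft_stepIndicator (m j : ZMod n) : 𝓕 (stepIndicator ℂ m) j = cycleEigenvalue (m * j) := by
  rw [stepIndicator, map_add, Pi.add_apply, dft_single_one, dft_single_one, cycleEigenvalue,
    neg_mul, neg_neg, add_comm]

lemma sum_stepIndicator_sub (R : Type*) [CommRing R] (m i : ZMod n) :
    ∑ j, stepIndicator R m (i - j) = 2 := by
  rw [Fintype.sum_equiv (Equiv.subLeft i) (fun j ↦ stepIndicator R m (i - j)) (stepIndicator R m)
    fun _ ↦ rfl]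
  simp [stepIndicator, Finset.sum_add_distrib, one_add_one_eq_two]

lemma isRegularOfDegree_genPetersen (hk : (2 * k : ZMod n) ≠ 0) :
    (genPetersen n k).IsRegularOfDegree 3 := by
  intro v
  zify
  calc ((genPetersen n k).degree v : ℤ)
      = ∑ w, (genPetersen n k).adjMatrix ℤ v w :=
        (genPetersen n k).degree_eq_sum_if_adj v
    _ = 3 := by
      rw [adjMatrix_genPetersen ℤ hk, Fintype.sum_sum_type]
      obtain i | i := v <;> simp [Matrix.one_apply, sum_stepIndicator_sub]

lemma lapMatrix_genPetersen_add_of_one (hk : (2 * k : ZMod n) ≠ 0) :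
    (genPetersen n k).lapMatrix ℂ + Matrix.of (fun _ _ ↦ 1) =
      Matrix.fromBlocks
        (Matrix.circulant ((3 : ℂ) • Pi.single 0 1 - stepIndicator ℂ 1 + 1))
        (Matrix.circulant (1 - Pi.single 0 1))
        (Matrix.circulant (1 - Pi.single 0 1))
        (Matrix.circulant ((3 : ℂ) • Pi.single 0 1 - stepIndicator ℂ k + 1)) := by
  have hdeg : (genPetersen n k).degMatrix ℂ = Matrix.diagonal fun _ ↦ 3 := by
    rw [SimpleGraph.degMatrix]
    exact_mod_cast congrArg Matrix.diagonal
      (funext fun v ↦ congrArg (Nat.cast (R := ℂ)) ((isRegularOfDegree_genPetersen hk).degree_eq v))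
  rw [SimpleGraph.lapMatrix, hdeg, adjMatrix_genPetersen ℂ hk]
  ext (i | i) (j | j) <;>
    simp [Matrix.diagonal_apply, Matrix.one_apply, Pi.single_apply, sub_eq_zero, neg_add_eq_sub]

theorem natCast_mul_numSpanningTrees_genPetersen (hk : (2 * k : ZMod n) ≠ 0) :
    (n * numSpanningTrees (genPetersen n k) : ℂ) =
      ∏ j ∈ (Finset.univ : Finset (ZMod n)).erase 0,
        ((3 - cycleEigenvalue j) * (3 - cycleEigenvalue ((k : ZMod n) * j)) - 1) := by
  let a (m : ZMod n) : ZMod n → ℂ := (3 : ℂ) • Pi.single 0 1 - stepIndicator ℂ m + 1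
  let b : ZMod n → ℂ := 1 - Pi.single 0 1
  have dft_a (m j : ZMod n) :
      𝓕 (a m) j = 3 - cycleEigenvalue (m * j) + if j = 0 then (n : ℂ) else 0 := by
    simp [a, dft_stepIndicator, dft_one, dft_single_one]
  have dft_b (j : ZMod n) : 𝓕 b j = (if j = 0 then (n : ℂ) else 0) - 1 := by
    simp [b, dft_one, dft_single_one]
  have factor_zero : 𝓕 (a 1) 0 * 𝓕 (a k) 0 - 𝓕 b 0 * 𝓕 b 0 = 4 * n := by
    simp only [dft_a, dft_b, mul_zero, cycleEigenvalue_zero, if_true]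
    ring
  have factor (j : ZMod n) (hj : j ∈ Finset.univ.erase 0) :
      𝓕 (a 1) j * 𝓕 (a k) j - 𝓕 b j * 𝓕 b j =
        (3 - cycleEigenvalue j) * (3 - cycleEigenvalue ((k : ZMod n) * j)) - 1 := by
    simp [dft_a, dft_b, Finset.ne_of_mem_erase hj]
  have hdet : (Fintype.card (ZMod n ⊕ ZMod n) : ℂ) ^ 2 * numSpanningTrees (genPetersen n k) =
      ∏ j, (𝓕 (a 1) j * 𝓕 (a k) j - 𝓕 b j * 𝓕 b j) := by
    rw [← det_lapMatrix_add_of_one, lapMatrix_genPetersen_add_of_one hk, det_fromBlocks_circulant]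
  rw [← Finset.mul_prod_erase _ _ (Finset.mem_univ 0), factor_zero,
    Finset.prod_congr rfl factor, Fintype.card_sum, ZMod.card] at hdet
  refine mul_left_cancel₀ (mul_ne_zero (by norm_num : (4 : ℂ) ≠ 0) (NeZero.ne (n : ℂ))) ?_
  rw [← hdet]
  push_cast
  ring

end GenPetersen

/-! ### Chebyshev products -/

section Chebyshev

open ZMod

variable {n : ℕ} [NeZero n]

lemma prod_sub_stdAddChar (z : ℂ) : ∏ j : ZMod n, (z - stdAddChar j) = z ^ n - 1 := by
  have hprim := Complex.isPrimitiveRoot_exp n (NeZero.ne n)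
  have image_stdAddChar : (Finset.univ : Finset (ZMod n)).image (fun j ↦ (stdAddChar j : ℂ)) =
      nthRootsFinset n (1 : ℂ) := by
    refine Finset.eq_of_subset_of_card_le (fun w hw ↦ ?_) ?_
    · obtain ⟨j, -, rfl⟩ := Finset.mem_image.mp hw
      rw [mem_nthRootsFinset (NeZero.pos n), ← AddChar.map_nsmul_eq_pow]
      simp
    · rw [hprim.card_nthRootsFinset, Finset.card_image_of_injective _ injective_stdAddChar,
        Finset.card_univ, ZMod.card]
  have := congrArg (eval z) (X_pow_sub_one_eq_prod (NeZero.pos n) hprim)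
  rw [← image_stdAddChar, Finset.prod_image (injective_stdAddChar.injOn)] at this
  simpa [eval_prod] using this.symm

lemma prod_two_mul_sub_cycleEigenvalue (x : ℂ) :
    ∏ j : ZMod n, (2 * x - cycleEigenvalue j) = 2 * ((Chebyshev.T ℂ n).eval x - 1) := by
  obtain ⟨θ, rfl⟩ := Complex.cos_surjective x
  set z := Complex.exp (θ * Complex.I) with hz
  have hz0 : z ≠ 0 := Complex.exp_ne_zero _
  have two_mul_cos : 2 * Complex.cos θ = z + z⁻¹ := by
    rw [Complex.two_cos, hz, ← Complex.exp_neg, neg_mul]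
  have two_mul_cos_nat : 2 * Complex.cos ((n : ℤ) * θ) = z ^ n + (z ^ n)⁻¹ := by
    rw [Complex.two_cos, hz, ← Complex.exp_nat_mul, ← Complex.exp_neg]
    push_cast
    ring_nf
  have factor (j : ZMod n) : 2 * Complex.cos θ - cycleEigenvalue j =
      z⁻¹ * ((z - stdAddChar j) * (z - stdAddChar (-j))) := by
    rw [two_mul_cos, cycleEigenvalue]
    field_simp
    linear_combination -stdAddChar_mul_stdAddChar_neg j
  have prod_neg : ∏ j : ZMod n, (z - stdAddChar (-j)) = z ^ n - 1 := by
    rw [← prod_sub_stdAddChar]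
    exact Fintype.prod_equiv (Equiv.neg _) _ _ fun _ ↦ rfl
  calc ∏ j : ZMod n, (2 * Complex.cos θ - cycleEigenvalue j)
      = z⁻¹ ^ n * ((z ^ n - 1) * (z ^ n - 1)) := by
        simp only [factor, Finset.prod_mul_distrib, prod_sub_stdAddChar, prod_neg,
          Finset.prod_const, Finset.card_univ, ZMod.card]
    _ = z ^ n + (z ^ n)⁻¹ - 2 := by
        have : z ^ n ≠ 0 := pow_ne_zero n hz0
        rw [inv_pow]
        field_simp
        ring
    _ = 2 * ((Chebyshev.T ℂ n).eval (Complex.cos θ) - 1) := by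
        rw [Chebyshev.T_complex_cos, mul_sub, two_mul_cos_nat, mul_one]

lemma prod_two_sub_cycleEigenvalue :
    ∏ j ∈ (Finset.univ : Finset (ZMod n)).erase 0, (2 - cycleEigenvalue j) = (n : ℂ) ^ 2 := by
  -- Differentiate `∏ j, (2X - λ_j) = 2(T_n - 1)` at `1`, a zero of the `j = 0` factor.
  let Q : ℂ[X] := ∏ j ∈ (Finset.univ : Finset (ZMod n)).erase 0, (2 * X - C (cycleEigenvalue j))
  have hQ : (X - 1) * Q = Chebyshev.T ℂ n - 1 := by
    refine Polynomial.funext fun x ↦ mul_left_cancel₀ (two_ne_zero' ℂ) ?_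
    have := prod_two_mul_sub_cycleEigenvalue (n := n) x
    rw [← Finset.mul_prod_erase _ _ (Finset.mem_univ 0), cycleEigenvalue_zero] at this
    simp only [Q, eval_mul, eval_sub, eval_X, eval_one, eval_prod, eval_ofNat, eval_C]
    linear_combination this
  have hderiv := congrArg (fun p ↦ (derivative p).eval 1) hQ
  simpa [Q, eval_prod, Chebyshev.derivative_T_eval_one] using hderiv

theorem five_mul_numSpanningTrees_genPetersen_two (hn : (4 : ZMod n) ≠ 0) {x y : ℂ}
    (hadd : x + y = 1 / 2) (hmul : x * y = -7 / 4) :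
    (5 * numSpanningTrees (genPetersen n 2) : ℂ) =
      (-1) ^ n * (4 * n * ((Chebyshev.T ℂ n).eval x - 1) * ((Chebyshev.T ℂ n).eval y - 1)) := by
  have factor (j : ZMod n) :
      (3 - cycleEigenvalue j) * (3 - cycleEigenvalue (((2 : ℕ) : ZMod n) * j)) - 1 =
        -1 * (2 - cycleEigenvalue j) *
          ((2 * x - cycleEigenvalue j) * (2 * y - cycleEigenvalue j)) := by
    rw [Nat.cast_two, cycleEigenvalue_two_mul]
    linear_combination (2 - cycleEigenvalue j) * (4 * hmul - 2 * cycleEigenvalue j * hadd)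
  have hprod : -5 * ∏ j ∈ (Finset.univ : Finset (ZMod n)).erase 0,
        ((2 * x - cycleEigenvalue j) * (2 * y - cycleEigenvalue j)) =
      (2 * ((Chebyshev.T ℂ n).eval x - 1)) * (2 * ((Chebyshev.T ℂ n).eval y - 1)) := by
    have factor_zero : (2 * x - 2) * (2 * y - 2) = -5 := by
      linear_combination 4 * hmul - 4 * hadd
    rw [← prod_two_mul_sub_cycleEigenvalue, ← prod_two_mul_sub_cycleEigenvalue,
      ← Finset.prod_mul_distrib, ← Finset.mul_prod_erase _ _ (Finset.mem_univ 0),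
      cycleEigenvalue_zero, factor_zero]
  have htrees : (n * numSpanningTrees (genPetersen n 2) : ℂ) =
      (-1) ^ (n - 1) * n ^ 2 * ∏ j ∈ (Finset.univ : Finset (ZMod n)).erase 0,
        ((2 * x - cycleEigenvalue j) * (2 * y - cycleEigenvalue j)) := by
    rw [natCast_mul_numSpanningTrees_genPetersen (by norm_num [hn]),
      Finset.prod_congr rfl fun j _ ↦ factor j, Finset.prod_mul_distrib, Finset.prod_mul_distrib,
      prod_two_sub_cycleEigenvalue, Finset.prod_const, Finset.card_erase_of_mem (Finset.mem_univ 0),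
      Finset.card_univ, ZMod.card]
  refine mul_left_cancel₀ (NeZero.ne (n : ℂ)) ?_
  have hsign : (-1 : ℂ) ^ n = -(-1) ^ (n - 1) := by
    rw [← mul_pow_sub_one (NeZero.ne n), neg_one_mul]
  rw [hsign]
  linear_combination 5 * htrees - (-1) ^ (n - 1) * n ^ 2 * hprod

end Chebyshev

/-! ### Quadratic conjugation -/

section Conjugation

variable {F K : Type*} [Field F] [Field K] [Algebra F K] {s : K} {d : F}

lemma minpoly_eq_X_sq_sub_C (hs : s ^ 2 = algebraMap F K d)
    (hirr : s ∉ (algebraMap F K).range) :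
    minpoly F s = X ^ 2 - C d := by
  have hmonic : (X ^ 2 - C d).Monic := monic_X_pow_sub_C d two_ne_zero
  have hroot : aeval s (X ^ 2 - C d) = 0 := by simp [hs]
  have hint : IsIntegral F s := ⟨_, hmonic, hroot⟩
  refine eq_of_monic_of_dvd_of_natDegree_le (minpoly.monic hint) hmonic
    (minpoly.dvd F s hroot) ?_ |>.symm
  rw [natDegree_X_pow_sub_C]
  exact (minpoly.two_le_natDegree_iff hint).mpr hirr

lemma aeval_neg_eq_zero_of_sq_eq (hs : s ^ 2 = algebraMap F K d)
    (hirr : s ∉ (algebraMap F K).range) {p : F[X]} (hp : aeval s p = 0) : aeval (-s) p = 0 := by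
  obtain ⟨q, rfl⟩ := minpoly.dvd F s hp
  simp [minpoly_eq_X_sq_sub_C hs hirr, hs]

lemma aeval_sub_mul_of_aeval_add_mul (hs : s ^ 2 = algebraMap F K d)
    (hirr : s ∉ (algebraMap F K).range) {p : F[X]} {a b c e : F}
    (hp : aeval (algebraMap F K c + algebraMap F K e * s) p =
      algebraMap F K a + algebraMap F K b * s) :
    aeval (algebraMap F K c - algebraMap F K e * s) p =
      algebraMap F K a - algebraMap F K b * s := by
  have hroot : aeval s (p.comp (C c + C e * X) - (C a + C b * X)) = 0 := by
    simp [aeval_comp, hp]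
  have hconj := aeval_neg_eq_zero_of_sq_eq hs hirr hroot
  simpa [aeval_comp, sub_eq_zero, ← sub_eq_add_neg] using hconj

lemma eval_T_sub_one_conj {n : ℤ} {s : ℝ} {d a b : ℚ} (hs : s ^ 2 = d) (hirr : Irrational s)
    (h : (Chebyshev.T ℝ n).eval ((1 + s) / 4) - 1 = (a + b * s) / 4) :
    (Chebyshev.T ℝ n).eval ((1 - s) / 4) - 1 = (a - b * s) / 4 := by
  have hadd : (1 + s) / 4 = algebraMap ℚ ℝ (1 / 4) + algebraMap ℚ ℝ (1 / 4) * s := by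
    push_cast [eq_ratCast]
    ring
  have hsub : (1 - s) / 4 = algebraMap ℚ ℝ (1 / 4) - algebraMap ℚ ℝ (1 / 4) * s := by
    push_cast [eq_ratCast]
    ring
  have hT : aeval (algebraMap ℚ ℝ (1 / 4) + algebraMap ℚ ℝ (1 / 4) * s) (Chebyshev.T ℚ n) =
      algebraMap ℚ ℝ (1 + a / 4) + algebraMap ℚ ℝ (b / 4) * s := by
    rw [Chebyshev.aeval_T, ← hadd, sub_eq_iff_eq_add.mp h]
    push_cast [eq_ratCast]
    ring
  have hT_conj := aeval_sub_mul_of_aeval_add_mul hs hirr hT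
  rw [Chebyshev.aeval_T, ← hsub] at hT_conj
  rw [hT_conj]
  push_cast [eq_ratCast]
  ring

end Conjugation

/-- If `α, β ∈ ℤ` satisfy `T_n((1 + √29)/4) − 1 = (α + β√29)/4`, then
`20·τ(GP(n,2)) = (−1)^n · n · (α² − 29β²)`. -/
theorem spanning_trees_GP2_alpha_beta (n : ℕ) (hn : 5 ≤ n) (α β : ℤ)
    (hαβ : (Polynomial.Chebyshev.T ℝ n).eval ((1 + Real.sqrt 29) / 4) - 1 =
      (α + β * Real.sqrt 29) / 4) :
    (20 * numSpanningTrees (genPetersen n 2) : ℤ) =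
      (-1) ^ n * n * (α ^ 2 - 29 * β ^ 2) := by
  have : NeZero n := ⟨by omega⟩
  have hfour : (4 : ZMod n) ≠ 0 := by
    rw [← Nat.cast_ofNat, Ne, ZMod.natCast_eq_zero_iff]
    exact Nat.not_dvd_of_pos_of_lt four_pos hn
  have hsq : √29 ^ 2 = 29 := Real.sq_sqrt (by norm_num)
  have hconj : (Chebyshev.T ℝ n).eval ((1 - √29) / 4) - 1 = (α - β * √29) / 4 := by
    exact_mod_cast eval_T_sub_one_conj (d := 29) (a := α) (b := β) (by exact_mod_cast hsq)
      (Nat.Prime.irrational_sqrt (by norm_num)) (by exact_mod_cast hαβ)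
  have hsqC : (√29 : ℂ) ^ 2 = 29 := mod_cast hsq
  have htrees := five_mul_numSpanningTrees_genPetersen_two hfour
    (x := ((1 + √29) / 4 : ℝ)) (y := ((1 - √29) / 4 : ℝ))
    (by push_cast; ring) (by push_cast; linear_combination -hsqC / 16)
  rw [← Chebyshev.complex_ofReal_eval_T, ← Chebyshev.complex_ofReal_eval_T,
    sub_eq_iff_eq_add.mp hαβ, sub_eq_iff_eq_add.mp hconj] at htrees
  push_cast at htrees
  have hcast : (20 * numSpanningTrees (genPetersen n 2) : ℂ) =
      (-1) ^ n * n * (α ^ 2 - 29 * β ^ 2) := by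
    linear_combination 4 * htrees - (-1) ^ n * n * β ^ 2 * hsqC
  exact_mod_cast hcast
end
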